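/- Suppose F is ε-approximately k-submodular with respect to f, and let x⁽⁰⁾ = 𝟎, x⁽¹⁾, …, x⁽ᴮ⁾ be a greedy TS sequence of length B for f (not for F) with 1 ≤ B ≤ |V|. Then F(x⁽ᴮ⁾) ≥ ((1−ε)/(2(1+ε)))·F(o) for every k-state o with |supp(o)| ≤ B. (That is, running k-Greedy-TS on the underlying k-submodular function f yields a ((1−ε)/(2(1+ε)))-approximation for maximizing F under the total size constraint.) -/

import Mathlib

/-!
The factor `1/2` comes from greedy itself, applied to the exact function `f`; replacing `f` by `F`
at both ends then costs the factor `(1 - ε) / (1 + ε)`.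

For the factor `1/2`, an arbitrary competitor `o` is transformed into the greedy solution one step
at a time, always staying above the current greedy state and within the budget. At a greedy step
`(e, i)`, some `e'` is dropped from `o` (namely `e' = e` if `e` is already assigned in `o`, and any
`e'` assigned in `o` but not by greedy otherwise) and `(e, i)` is put in. By diminishing returns and
the greedy choice, dropping `e'` loses at most the gain of the greedy step, and by monotonicity
inserting `(e, i)` loses nothing (`exists_exchange`). The greedy gains telescope, so
`f o - f (x B) ≤ f (x B) - f 0 = f (x B)` (`GreedyTS.le_two_mul`).
-/

/-- The support of a `k`-state: elements assigned a nonzero value. -/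
def supp {V : Type*} [Fintype V] {k : ℕ} [DecidableEq V] (x : V → Fin (k+1)) : Finset V :=
  Finset.univ.filter (fun e => x e ≠ 0)

/-- The `i`-th support of a `k`-state: elements assigned value `i`. -/
def suppi {V : Type*} [Fintype V] {k : ℕ} [DecidableEq V] (x : V → Fin (k+1)) (i : Fin (k+1)) :
    Finset V :=
  Finset.univ.filter (fun e => x e = i)

/-- The partial order on `k`-states: `y` agrees with `x` on the support of `x`. -/
def kle {V : Type*} {k : ℕ} (x y : V → Fin (k+1)) : Prop :=
  ∀ e, x e ≠ 0 → y e = x e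

/-- `kadd x e i` is the `k`-state agreeing with `x` except that `e` is assigned `i`. -/
def kadd {V : Type*} [DecidableEq V] {k : ℕ} (x : V → Fin (k+1)) (e : V) (i : Fin (k+1)) :
    V → Fin (k+1) :=
  Function.update x e i

/-- The marginal gain `Δ_{e,i} g (x) = g(x + (e,i)) - g(x)`. -/
def marg {V : Type*} [DecidableEq V] {k : ℕ} (g : (V → Fin (k+1)) → ℝ) (e : V)
    (i : Fin (k+1)) (x : V → Fin (k+1)) : ℝ :=
  g (kadd x e i) - g x

/-- `f` is monotone and satisfies the diminishing returns property (monotone k-submodular). -/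
def KSubmodular {V : Type*} [Fintype V] [DecidableEq V] {k : ℕ}
    (f : (V → Fin (k+1)) → ℝ) : Prop :=
  (∀ x y : V → Fin (k+1), kle x y → f x ≤ f y) ∧
  (∀ x y : V → Fin (k+1), kle x y → ∀ e, e ∉ supp y → ∀ i : Fin (k+1), i ≠ 0 →
    marg f e i x ≥ marg f e i y)

/-- `F` is ε-approximately k-submodular (ε-AS) with respect to `f`. -/
def EpsAS {V : Type*} [Fintype V] [DecidableEq V] {k : ℕ} (ε : ℝ)
    (F f : (V → Fin (k+1)) → ℝ) : Prop :=
  (∀ x, 0 ≤ f x) ∧ KSubmodular f ∧ f (fun _ => (0 : Fin (k+1))) = 0 ∧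
  (∀ x : V → Fin (k+1), (1 - ε) * f x ≤ F x ∧ F x ≤ (1 + ε) * f x)

/-- `F` is ε-approximately diminishing returns (ε-ADR) with respect to `f`. -/
def EpsADR {V : Type*} [Fintype V] [DecidableEq V] {k : ℕ} (ε : ℝ)
    (F f : (V → Fin (k+1)) → ℝ) : Prop :=
  (∀ x, 0 ≤ f x) ∧ KSubmodular f ∧ f (fun _ => (0 : Fin (k+1))) = 0 ∧
  (∀ x : V → Fin (k+1), ∀ e, e ∉ supp x → ∀ i : Fin (k+1), i ≠ 0 →
    (1 - ε) * marg f e i x ≤ marg F e i x ∧ marg F e i x ≤ (1 + ε) * marg f e i x)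

/-- A greedy TS sequence of length `B` for `G` (run of k-Greedy-TS on `G` with budget `B`). -/
def GreedyTS {V : Type*} [Fintype V] [DecidableEq V] {k : ℕ}
    (G : (V → Fin (k+1)) → ℝ) (B : ℕ) (x : ℕ → V → Fin (k+1))
    (es : ℕ → V) (is : ℕ → Fin (k+1)) : Prop :=
  x 0 = (fun _ => (0 : Fin (k+1))) ∧
  ∀ j, 1 ≤ j → j ≤ B →
    es j ∉ supp (x (j-1)) ∧ is j ≠ 0 ∧
    x j = kadd (x (j-1)) (es j) (is j) ∧
    (∀ e, e ∉ supp (x (j-1)) → ∀ i : Fin (k+1), i ≠ 0 →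
      marg G (es j) (is j) (x (j-1)) ≥ marg G e i (x (j-1)))

/-- A greedy IS sequence for `G` with individual budgets `Bv` (run of k-Greedy-IS on `G`). -/
def GreedyIS {V : Type*} [Fintype V] [DecidableEq V] {k : ℕ}
    (G : (V → Fin (k+1)) → ℝ) (Bv : Fin (k+1) → ℕ) (B : ℕ) (x : ℕ → V → Fin (k+1))
    (es : ℕ → V) (is : ℕ → Fin (k+1)) : Prop :=
  x 0 = (fun _ => (0 : Fin (k+1))) ∧
  ∀ j, 1 ≤ j → j ≤ B →
    es j ∉ supp (x (j-1)) ∧ is j ≠ 0 ∧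
    (suppi (x (j-1)) (is j)).card < Bv (is j) ∧
    x j = kadd (x (j-1)) (es j) (is j) ∧
    (∀ e, e ∉ supp (x (j-1)) → ∀ i : Fin (k+1), i ≠ 0 →
      (suppi (x (j-1)) i).card < Bv i →
      marg G (es j) (is j) (x (j-1)) ≥ marg G e i (x (j-1)))

theorem mem_supp {V : Type*} [Fintype V] [DecidableEq V] {k : ℕ} {x : V → Fin (k+1)} {e : V} :
    e ∈ supp x ↔ x e ≠ 0 := by
  simp [supp]

theorem supp_kadd {V : Type*} [Fintype V] [DecidableEq V] {k : ℕ} (x : V → Fin (k+1)) (e : V)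
    {i : Fin (k+1)} (hi : i ≠ 0) : supp (kadd x e i) = insert e (supp x) := by
  ext a
  by_cases h : a = e
  · subst h; simp [mem_supp, kadd, hi]
  · simp [mem_supp, kadd, h]

theorem supp_kadd_zero {V : Type*} [Fintype V] [DecidableEq V] {k : ℕ} (x : V → Fin (k+1))
    (e : V) : supp (kadd x e 0) = (supp x).erase e := by
  ext a
  by_cases h : a = e
  · subst h; simp [mem_supp, kadd]
  · simp [mem_supp, kadd, h]

theorem kle_kadd {V : Type*} [Fintype V] [DecidableEq V] {k : ℕ} {x : V → Fin (k+1)} {e : V}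
    (he : e ∉ supp x) (i : Fin (k+1)) : kle x (kadd x e i) := by
  intro a ha
  have : a ≠ e := fun h => he (mem_supp.2 (h ▸ ha))
  simp [kadd, this]

theorem kle.kadd_kadd {V : Type*} [DecidableEq V] {k : ℕ} {x y : V → Fin (k+1)}
    (h : kle x y) (e : V) (i : Fin (k+1)) : kle (kadd x e i) (kadd y e i) := by
  intro a ha
  by_cases hae : a = e
  · subst hae; simp [kadd]
  · simp only [kadd, Function.update_of_ne hae] at ha ⊢
    exact h a ha

theorem kle.eq_of_supp_subset {V : Type*} [Fintype V] [DecidableEq V] {k : ℕ}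
    {x y : V → Fin (k+1)} (h : kle x y) (hs : supp y ⊆ supp x) : x = y := by
  funext a
  by_cases ha : x a = 0
  · by_contra hne
    exact mem_supp.1 (hs (mem_supp.2 (fun h0 => hne (ha.trans h0.symm)))) ha
  · exact (h a ha).symm

theorem kle.supp_subset {V : Type*} [Fintype V] [DecidableEq V] {k : ℕ}
    {x y : V → Fin (k+1)} (h : kle x y) : supp x ⊆ supp y := by
  intro a ha
  rw [mem_supp] at ha ⊢
  rwa [h a ha]

/-- The exchange step: a competitor `o` above the greedy state `x` can be replaced by one above
`x + (e, i)`, within the same budget `N`, at a loss of at most the greedy gain. -/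
theorem exists_exchange {V : Type*} [Fintype V] [DecidableEq V] {k : ℕ}
    {f : (V → Fin (k+1)) → ℝ} (hf : KSubmodular f) {x o : V → Fin (k+1)} {e : V}
    {i : Fin (k+1)} {N : ℕ} (he : e ∉ supp x) (hi : i ≠ 0)
    (hmax : ∀ e', e' ∉ supp x → ∀ i' : Fin (k+1), i' ≠ 0 → marg f e' i' x ≤ marg f e i x)
    (hxN : (supp x).card + 1 ≤ N) (hoN : (supp o).card ≤ N) (hxo : kle x o) :
    ∃ o', kle (kadd x e i) o' ∧ (supp o').card ≤ N ∧ f o ≤ f o' + marg f e i x := by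
  by_cases hs : supp o ⊆ supp x
  · -- Here `o = x`, so `(e, i)` is inserted without dropping anything.
    obtain rfl := hxo.eq_of_supp_subset hs
    have h1 := hf.1 _ _ (kle_kadd he i)
    refine ⟨kadd x e i, fun _ _ => rfl, ?_, ?_⟩
    · rw [supp_kadd _ _ hi]
      exact (Finset.card_insert_le _ _).trans hxN
    · simp only [marg]; linarith
  · obtain ⟨e', he'o, he'x, hee'⟩ : ∃ e', e' ∈ supp o ∧ e' ∉ supp x ∧ (e ∈ supp o → e' = e) := by
      by_cases heo : e ∈ supp o
      · exact ⟨e, heo, he, fun _ => rfl⟩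
      · obtain ⟨e', h1, h2⟩ := Finset.not_subset.1 hs
        exact ⟨e', h1, h2, fun h => absurd h heo⟩
    have hxm : kle x (kadd o e' 0) := by
      intro a ha
      have hae : a ≠ e' := fun h => he'x (mem_supp.2 (h ▸ ha))
      simpa [kadd, hae] using hxo a ha
    have he'm : e' ∉ supp (kadd o e' 0) := by simp [supp_kadd_zero]
    have hem : e ∉ supp (kadd o e' 0) := by
      rw [supp_kadd_zero, Finset.mem_erase]
      exact fun h => h.1 (hee' h.2).symm
    refine ⟨kadd (kadd o e' 0) e i, hxm.kadd_kadd e i, ?_, ?_⟩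
    · rw [supp_kadd _ _ hi, supp_kadd_zero]
      refine (Finset.card_insert_le _ _).trans ?_
      rwa [Finset.card_erase_add_one he'o]
    · have h1 := hf.1 _ _ (kle_kadd hem i)
      have h2 := hf.2 _ _ hxm e' he'm (o e') (mem_supp.1 he'o)
      have h3 := hmax e' he'x (o e') (mem_supp.1 he'o)
      have h4 : kadd (kadd o e' 0) e' (o e') = o := by simp [kadd]
      have h5 : marg f e' (o e') (kadd o e' 0) = f o - f (kadd o e' 0) := by
        rw [marg, h4]
      linarith

theorem GreedyTS.card_supp {V : Type*} [Fintype V] [DecidableEq V] {k : ℕ}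
    {f : (V → Fin (k+1)) → ℝ} {B : ℕ} {x : ℕ → V → Fin (k+1)} {es : ℕ → V}
    {is : ℕ → Fin (k+1)} (hgr : GreedyTS f B x es is) {j : ℕ} (hj : j ≤ B) :
    (supp (x j)).card = j := by
  induction j with
  | zero => simp [hgr.1, supp]
  | succ j ih =>
    obtain ⟨h1, h2, h3, -⟩ := hgr.2 (j + 1) (by omega) hj
    rw [Nat.add_sub_cancel] at h1 h3
    rw [h3, supp_kadd _ _ h2, Finset.card_insert_of_notMem h1, ih (by omega)]

/-- After `j` greedy steps, some state above `x j` still within the budget has lost, compared to the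
competitor `o`, at most the value `f (x j)` gained so far. -/
theorem GreedyTS.exists_competitor {V : Type*} [Fintype V] [DecidableEq V] {k : ℕ}
    {f : (V → Fin (k+1)) → ℝ} {B : ℕ} {x : ℕ → V → Fin (k+1)} {es : ℕ → V}
    {is : ℕ → Fin (k+1)} (hgr : GreedyTS f B x es is) (hf : KSubmodular f)
    (hf0 : f (fun _ => (0 : Fin (k+1))) = 0) {o : V → Fin (k+1)} (ho : (supp o).card ≤ B)
    {j : ℕ} (hj : j ≤ B) :
    ∃ o', kle (x j) o' ∧ (supp o').card ≤ B ∧ f o ≤ f o' + f (x j) := by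
  induction j with
  | zero =>
    refine ⟨o, fun a ha => ?_, ho, ?_⟩
    · simp [hgr.1] at ha
    · rw [hgr.1, hf0, add_zero]
  | succ j ih =>
    obtain ⟨p, hp1, hp2, hp3⟩ := ih (by omega)
    obtain ⟨h1, h2, h3, h4⟩ := hgr.2 (j + 1) (by omega) hj
    rw [Nat.add_sub_cancel] at h1 h3 h4
    have hc : (supp (x j)).card + 1 ≤ B := by
      rw [hgr.card_supp (by omega)]; exact hj
    obtain ⟨q, hq1, hq2, hq3⟩ := exists_exchange hf h1 h2 h4 hc hp2 hp1
    refine ⟨q, h3 ▸ hq1, hq2, ?_⟩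
    rw [h3]
    simp only [marg] at hq3
    linarith

theorem GreedyTS.le_two_mul {V : Type*} [Fintype V] [DecidableEq V] {k : ℕ}
    {f : (V → Fin (k+1)) → ℝ} {B : ℕ} {x : ℕ → V → Fin (k+1)} {es : ℕ → V}
    {is : ℕ → Fin (k+1)} (hgr : GreedyTS f B x es is) (hf : KSubmodular f)
    (hf0 : f (fun _ => (0 : Fin (k+1))) = 0) {o : V → Fin (k+1)} (ho : (supp o).card ≤ B) :
    f o ≤ 2 * f (x B) := by
  obtain ⟨p, hp1, hp2, hp3⟩ := hgr.exists_competitor hf hf0 ho le_rfl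
  -- The support of `x B` already exhausts the budget, so the last competitor is `x B` itself.
  have hs := Finset.eq_of_subset_of_card_le hp1.supp_subset
    (by rw [hgr.card_supp le_rfl]; exact hp2)
  obtain rfl := hp1.eq_of_supp_subset hs.ge
  linarith

/-- running k-Greedy-TS on `f` gives a (1-ε)/(2(1+ε)) approximation for `F`. -/
theorem stmt16 {V : Type*} [Fintype V] [DecidableEq V] {k : ℕ} (hk : 1 ≤ k)
    (ε : ℝ) (hε0 : 0 < ε) (hε1 : ε < 1)
    (F f : (V → Fin (k+1)) → ℝ)
    (hAS : EpsAS ε F f)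
    (B : ℕ) (hB1 : 1 ≤ B) (hB : B ≤ Fintype.card V)
    (x : ℕ → V → Fin (k+1)) (es : ℕ → V) (is : ℕ → Fin (k+1))
    (hgr : GreedyTS f B x es is) :
    ∀ o : V → Fin (k+1), (supp o).card ≤ B →
      F (x B) ≥ ((1 - ε) / (2 * (1 + ε))) * F o := by
  obtain ⟨-, hf, hf0, hF⟩ := hAS
  intro o ho
  have h1 := hgr.le_two_mul hf hf0 ho
  have hpos : (0 : ℝ) < 1 + ε := by linarith
  calc (1 - ε) / (2 * (1 + ε)) * F o
      ≤ (1 - ε) / (2 * (1 + ε)) * ((1 + ε) * (2 * f (x B))) := by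
        have h2 : F o ≤ (1 + ε) * (2 * f (x B)) :=
          (hF o).2.trans (mul_le_mul_of_nonneg_left h1 hpos.le)
        exact mul_le_mul_of_nonneg_left h2 (div_nonneg (by linarith) (by linarith))
    _ = (1 - ε) * f (x B) := by field_simp
    _ ≤ F (x B) := (hF (x B)).1
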